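/- Let f ∈ ℝ[X_1,...,X_n, Y_1,...,Y_r] and let ℓ(x) = ((x_1+1)/(2n),...,(x_n+1)/(2n)). Define f̃(X, Y) = f(ℓ^{-1}(X), Y). If f, viewed in the ‖·‖_• norm (max of normalized coefficients with respect to the X-variables, treating Y-monomials separately), has deg_X f = d, then ‖f̃‖_• ≤ ‖f‖_• · (3n)^d. -/

import Mathlib

open MvPolynomial

noncomputable def degX {n r : ℕ} (f : MvPolynomial (Fin n ⊕ Fin r) ℝ) : ℕ :=
  f.support.sup fun s => ∑ i, s (Sum.inl i)

/-!
For a polynomial `p` in the `X`-variables alone, `‖p‖_• ≤ B` and `deg p ≤ d` say that the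
coefficients of `p` are dominated by those of `B * ∑ k ≤ d, (∑ i, X i) ^ k`. Domination is
compatible with sums, products and substitution, so `p (2n X - 1)` is dominated by
`B * ∑ k ≤ d, (2n ∑ i, X i + n) ^ k`, whose coefficient at a monomial of degree `g` is the
multinomial coefficient times `B * ∑ k ≤ d, k.choose g * (2n) ^ g * n ^ (k - g)`. The last sum is at
most `(3n) ^ d`. The `Y`-variables are inert: the substitution acts on each coefficient of `f`,
seen as a polynomial in `Y` over `R[X]`, separately.
-/

section Binomial

open Finset

theorem sum_range_choose_mul_pow_le {x : ℕ} (hx : 0 < x) (d g : ℕ) :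
    ∑ k ∈ range (d + 1), k.choose g * x ^ g ≤ (x + 1) ^ d := by
  induction d generalizing g with
  | zero => cases g <;> simp
  | succ d ih =>
    cases g with
    | zero => simpa using Nat.lt_pow_self (n := d + 1) (Nat.lt_add_of_pos_left hx)
    | succ g =>
      calc ∑ k ∈ range (d + 2), k.choose (g + 1) * x ^ (g + 1)
          = x * ∑ k ∈ range (d + 1), k.choose g * x ^ g
            + ∑ k ∈ range (d + 1), k.choose (g + 1) * x ^ (g + 1) := by
            rw [sum_range_succ', mul_sum, ← sum_add_distrib, Nat.choose_zero_succ, zero_mul,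
              add_zero]
            refine sum_congr rfl fun k _ => ?_
            rw [Nat.choose_succ_succ]
            ring
        _ ≤ x * (x + 1) ^ d + (x + 1) ^ d := by gcongr <;> exact ih _
        _ = (x + 1) ^ (d + 1) := by ring

theorem sum_range_choose_mul_mul_pow_mul_pow_le {x n d : ℕ} (hx : 0 < x) (hn : 0 < n ∨ d = 0)
    (g : ℕ) :
    ∑ k ∈ range (d + 1), k.choose g * (x * n) ^ g * n ^ (k - g) ≤ ((x + 1) * n) ^ d := by
  have pow_le : ∀ k ≤ d, n ^ k ≤ n ^ d := by
    intro k hk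
    rcases hn with hn | rfl
    · exact Nat.pow_le_pow_right hn hk
    · rw [Nat.le_zero.mp hk]
  calc ∑ k ∈ range (d + 1), k.choose g * (x * n) ^ g * n ^ (k - g)
      ≤ ∑ k ∈ range (d + 1), k.choose g * x ^ g * n ^ d := by
        refine sum_le_sum fun k hk => ?_
        rcases lt_or_ge k g with hkg | hgk
        · simp [Nat.choose_eq_zero_of_lt hkg]
        · calc k.choose g * (x * n) ^ g * n ^ (k - g) = k.choose g * x ^ g * n ^ k := by
                rw [← pow_mul_pow_sub n hgk]; ring
            _ ≤ k.choose g * x ^ g * n ^ d := by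
                exact Nat.mul_le_mul_left _ (pow_le k (Nat.le_of_lt_succ (mem_range.mp hk)))
    _ ≤ (x + 1) ^ d * n ^ d := by
        rw [← sum_mul]
        exact Nat.mul_le_mul_right _ (sum_range_choose_mul_pow_le hx d g)
    _ = ((x + 1) * n) ^ d := (mul_pow _ _ _).symm

end Binomial

section Majorant

variable {σ τ R : Type*} [CommRing R] [LinearOrder R] [IsStrictOrderedRing R]

/-- `IsMajorant q p` is the majorization `p ≪ q` of the method of majorants: every coefficient of
`p` is bounded in absolute value by the corresponding coefficient of `q`. -/
def IsMajorant (q p : MvPolynomial σ R) : Prop :=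
  ∀ s, |coeff s p| ≤ coeff s q

namespace IsMajorant

theorem monomial {a b : R} (h : |a| ≤ b) (t : σ →₀ ℕ) :
    IsMajorant (MvPolynomial.monomial t b) (MvPolynomial.monomial t a) := by
  classical
  intro s
  rw [coeff_monomial, coeff_monomial]
  split_ifs <;> simp [h]

theorem C {a b : R} (h : |a| ≤ b) :
    IsMajorant (MvPolynomial.C b : MvPolynomial σ R) (MvPolynomial.C a) :=
  monomial h 0

theorem X (i : σ) : IsMajorant (MvPolynomial.X i : MvPolynomial σ R) (MvPolynomial.X i) :=
  monomial abs_one.le _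

theorem one : IsMajorant (1 : MvPolynomial σ R) 1 :=
  monomial abs_one.le 0

theorem sum {ι : Type*} {t : Finset ι} {p q : ι → MvPolynomial σ R}
    (h : ∀ i ∈ t, IsMajorant (q i) (p i)) : IsMajorant (∑ i ∈ t, q i) (∑ i ∈ t, p i) := by
  intro s
  rw [coeff_sum, coeff_sum]
  exact (Finset.abs_sum_le_sum_abs _ _).trans (Finset.sum_le_sum fun i hi => h i hi s)

variable {p q p₁ q₁ p₂ q₂ : MvPolynomial σ R}

theorem coeff_nonneg (h : IsMajorant q p) (s : σ →₀ ℕ) : 0 ≤ coeff s q :=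
  (abs_nonneg _).trans (h s)

theorem add (h₁ : IsMajorant q₁ p₁) (h₂ : IsMajorant q₂ p₂) :
    IsMajorant (q₁ + q₂) (p₁ + p₂) := by
  intro s
  rw [coeff_add, coeff_add]
  exact (abs_add_le _ _).trans (add_le_add (h₁ s) (h₂ s))

theorem mul (h₁ : IsMajorant q₁ p₁) (h₂ : IsMajorant q₂ p₂) :
    IsMajorant (q₁ * q₂) (p₁ * p₂) := by
  classical
  intro s
  rw [coeff_mul, coeff_mul]
  refine (Finset.abs_sum_le_sum_abs _ _).trans (Finset.sum_le_sum fun x _ => ?_)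
  rw [abs_mul]
  exact mul_le_mul (h₁ x.1) (h₂ x.2) (abs_nonneg _) (h₁.coeff_nonneg x.1)

theorem pow (h : IsMajorant q p) (k : ℕ) : IsMajorant (q ^ k) (p ^ k) := by
  induction k with
  | zero => simpa only [pow_zero] using one
  | succ k ih => simpa only [pow_succ] using ih.mul h

theorem prod {ι : Type*} {t : Finset ι} {p q : ι → MvPolynomial σ R}
    (h : ∀ i, IsMajorant (q i) (p i)) : IsMajorant (∏ i ∈ t, q i) (∏ i ∈ t, p i) :=
  Finset.prod_hom_rel one fun i _ _ hbc => (h i).mul hbc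

theorem support_subset (h : IsMajorant q p) : p.support ⊆ q.support := by
  intro s hs
  have : 0 < coeff s q := (abs_pos.mpr (mem_support_iff.mp hs)).trans_le (h s)
  exact mem_support_iff.mpr this.ne'

theorem aeval {u v : σ → MvPolynomial τ R} (h : IsMajorant q p)
    (huv : ∀ i, IsMajorant (v i) (u i)) :
    IsMajorant (MvPolynomial.aeval v q) (MvPolynomial.aeval u p) := by
  have aeval_p : MvPolynomial.aeval u p
      = ∑ t ∈ q.support, MvPolynomial.C (coeff t p) * ∏ i ∈ t.support, u i ^ t i := by
    rw [aeval_def, eval₂_eq, algebraMap_eq]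
    refine Finset.sum_subset h.support_subset fun t _ ht => ?_
    rw [notMem_support_iff.mp ht, map_zero, zero_mul]
  rw [aeval_p, aeval_def, eval₂_eq, algebraMap_eq]
  exact sum fun t _ => (C (h t)).mul (prod fun i => (huv i).pow (t i))

end IsMajorant

end Majorant

section Affine

open Finset

theorem coeff_C_mul_sum_X_add_C_pow {σ R : Type*} [Fintype σ] [CommSemiring R] (a b : R) (k : ℕ)
    (γ : σ →₀ ℕ) :
    coeff γ ((C a * ∑ i, X i + C b) ^ k)
      = γ.multinomial * (k.choose γ.degree * a ^ γ.degree * b ^ (k - γ.degree)) := by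
  have coeff_term : ∀ j,
      coeff γ ((C a * ∑ i, X i) ^ j * C b ^ (k - j) * (k.choose j : MvPolynomial σ R))
        = if γ.degree = j then γ.multinomial * (k.choose j * a ^ j * b ^ (k - j)) else 0 := by
    intro j
    have : (C a * ∑ i, X i) ^ j * C b ^ (k - j) * (k.choose j : MvPolynomial σ R)
        = C (a ^ j * b ^ (k - j) * k.choose j) * (∑ i, X i) ^ j := by
      simp only [map_mul, map_pow, map_natCast]
      ring
    rw [this, coeff_C_mul, coeff_sum_X_pow_of_fintype, Nat.cast_ite, Nat.cast_zero, mul_ite,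
      mul_zero]
    exact if_congr Iff.rfl (by ring) rfl
  rw [add_pow, coeff_sum, sum_congr rfl fun j _ => coeff_term j, sum_ite_eq]
  split_ifs with h
  · rfl
  · rw [Nat.choose_eq_zero_of_lt (by simpa using h)]
    simp

variable {σ R : Type*} [Fintype σ] [CommRing R] [LinearOrder R] [IsStrictOrderedRing R]
  {p : MvPolynomial σ R} {d : ℕ} {B : R}

theorem isMajorant_C_mul_sum_sum_X_pow (hd : p.totalDegree ≤ d)
    (hB : ∀ γ, |coeff γ p| ≤ γ.multinomial * B) :
    IsMajorant (C B * ∑ k ∈ range (d + 1), (∑ i, X i) ^ k) p := by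
  intro γ
  rw [coeff_C_mul, coeff_sum]
  simp_rw [coeff_sum_X_pow_of_fintype, Nat.cast_ite, Nat.cast_zero]
  rw [sum_ite_eq]
  split_ifs with h
  · exact (hB γ).trans_eq (mul_comm _ _)
  · have : p.totalDegree < γ.degree :=
      hd.trans_lt (by simpa [Finsupp.degree_eq_sum, Finsupp.sum_fintype] using h)
    rw [coeff_eq_zero_of_totalDegree_lt this, abs_zero, mul_zero]

theorem abs_coeff_aeval_C_mul_X_add_C_le (hd : p.totalDegree ≤ d)
    (hB : ∀ γ, |coeff γ p| ≤ γ.multinomial * B) (a : R) (b : σ → R) (γ : σ →₀ ℕ) :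
    |coeff γ (aeval (fun i => C a * X i + C (b i)) p)| ≤ γ.multinomial * (B *
      ∑ k ∈ range (d + 1), k.choose γ.degree * |a| ^ γ.degree * (∑ i, |b i|) ^ (k - γ.degree)) := by
  have affine_majorant : ∀ i, IsMajorant (C |a| * X i + C |b i|) (C a * X i + C (b i)) :=
    fun i => ((IsMajorant.C le_rfl).mul (.X i)).add (.C le_rfl)
  have image_eq : aeval (fun i => C |a| * X i + C |b i|)
        (C B * ∑ k ∈ range (d + 1), (∑ i : σ, X i) ^ k)
      = C B * ∑ k ∈ range (d + 1), (C |a| * ∑ i, X i + C (∑ i, |b i|)) ^ k := by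
    simp only [map_mul, map_sum, map_pow, aeval_X, algHom_C, algebraMap_eq, sum_add_distrib,
      mul_sum]
  refine (((isMajorant_C_mul_sum_sum_X_pow hd hB).aeval affine_majorant) γ).trans_eq ?_
  rw [image_eq, coeff_C_mul, coeff_sum]
  simp_rw [coeff_C_mul_sum_X_add_C_pow]
  rw [← mul_sum]
  ring

theorem abs_coeff_aeval_mul_card_mul_X_sub_one_le {m : ℕ} (hm : 0 < m)
    (hcard : 0 < Fintype.card σ ∨ d = 0) (hd : p.totalDegree ≤ d)
    (hB : ∀ γ, |coeff γ p| ≤ γ.multinomial * B) (γ : σ →₀ ℕ) :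
    |coeff γ (aeval (fun i => C ((m * Fintype.card σ : ℕ) : R) * X i - 1) p)|
      ≤ γ.multinomial * (B * (((m + 1) * Fintype.card σ : ℕ) : R) ^ d) := by
  have hB0 : 0 ≤ B := by simpa [Finsupp.multinomial] using (abs_nonneg _).trans (hB 0)
  have sum_le := sum_range_choose_mul_mul_pow_mul_pow_le hm hcard γ.degree
  calc |coeff γ (aeval (fun i => C ((m * Fintype.card σ : ℕ) : R) * X i - 1) p)|
      ≤ γ.multinomial * (B * ((∑ k ∈ range (d + 1), k.choose γ.degree *
          (m * Fintype.card σ) ^ γ.degree * Fintype.card σ ^ (k - γ.degree) : ℕ) : R)) := by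
        simpa [sub_eq_add_neg, abs_mul] using
          abs_coeff_aeval_C_mul_X_add_C_le hd hB ((m * Fintype.card σ : ℕ) : R) (fun _ => -1) γ
    _ ≤ γ.multinomial * (B * (((m + 1) * Fintype.card σ : ℕ) : R) ^ d) := by
        gcongr
        exact_mod_cast sum_le

end Affine

section CoeffInr

variable {σ τ σ' R : Type*} [CommSemiring R]

/-- The coefficient of `Y ^ β` in a polynomial in the variables `X` (indexed by `σ`) and `Y`
(indexed by `τ`), as a polynomial in `X`. `sumAlgEquiv` puts the left summand on the outside, hence
the swap. -/
noncomputable def coeffInr (β : τ →₀ ℕ) (f : MvPolynomial (σ ⊕ τ) R) : MvPolynomial σ R :=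
  coeff β (sumAlgEquiv R τ σ (rename Sum.swap f))

theorem coeff_coeffInr (β : τ →₀ ℕ) (f : MvPolynomial (σ ⊕ τ) R) (γ : σ →₀ ℕ) :
    coeff γ (coeffInr β f) = coeff (γ.sumElim β) f := by
  rw [← coeff_rename_mapDomain Sum.swap Sum.swap_leftInverse.injective,
    Finsupp.mapDomain_swap_sumElim]
  simp [coeffInr, coeff]

theorem multinomial_sumElim_inl [Fintype σ] (γ : σ →₀ ℕ) (β : τ →₀ ℕ) :
    (Nat.multinomial Finset.univ fun i => γ.sumElim β (Sum.inl i)) = γ.multinomial :=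
  Finsupp.multinomial_of_support_subset γ.support.subset_univ

theorem totalDegree_coeffInr_le [Fintype σ] (β : τ →₀ ℕ) (f : MvPolynomial (σ ⊕ τ) R) :
    (coeffInr β f).totalDegree ≤ f.support.sup fun s => ∑ i, s (Sum.inl i) := by
  refine Finset.sup_le fun γ hγ => ?_
  have mem_support : γ.sumElim β ∈ f.support := by
    rwa [mem_support_iff, ← coeff_coeffInr, ← mem_support_iff]
  calc (γ.sum fun _ e => e) = ∑ i, γ.sumElim β (Sum.inl i) := γ.sum_fintype _ fun _ => rfl
    _ ≤ f.support.sup fun s => ∑ i, s (Sum.inl i) :=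
      Finset.le_sup (f := fun s : σ ⊕ τ →₀ ℕ => ∑ i, s (Sum.inl i)) mem_support

theorem coeffInr_aeval (u : σ → MvPolynomial σ' R) (β : τ →₀ ℕ) (f : MvPolynomial (σ ⊕ τ) R) :
    coeffInr β (aeval (Sum.elim (fun i => rename Sum.inl (u i)) fun j => X (Sum.inr j)) f)
      = aeval u (coeffInr β f) := by
  have sumAlgEquiv_inl (q : MvPolynomial σ' R) :
      sumAlgEquiv R τ σ' (rename Sum.swap (rename Sum.inl q)) = C q := by
    rw [rename_rename]
    exact DFunLike.congr_fun (sumAlgEquiv_comp_rename_inr R τ σ') q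
  have comm : ((sumAlgEquiv R τ σ').toAlgHom.comp (rename Sum.swap)).comp
        (aeval (Sum.elim (fun i => rename Sum.inl (u i)) fun j => X (Sum.inr j)))
      = (mapAlgHom (aeval u)).comp ((sumAlgEquiv R τ σ).toAlgHom.comp (rename Sum.swap)) := by
    ext1 (i | j)
    · simpa using sumAlgEquiv_inl (u i)
    · simp
  have := congrArg (coeff β) (DFunLike.congr_fun comm f)
  simpa [coeffInr, coeff_map] using this

end CoeffInr

section MultinomialBound

variable {σ τ R : Type*} [Fintype σ] [CommRing R] [LinearOrder R] [IsStrictOrderedRing R]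
  {f : MvPolynomial (σ ⊕ τ) R} {B : R}

theorem nonneg_of_abs_coeff_le_multinomial_mul (hf : f ≠ 0)
    (hB : ∀ s ∈ f.support,
      |f.coeff s| ≤ (Nat.multinomial Finset.univ fun i => s (Sum.inl i) : ℕ) * B) :
    0 ≤ B := by
  obtain ⟨s, hs⟩ := support_nonempty.mpr hf
  refine nonneg_of_mul_nonneg_right ((abs_nonneg _).trans (hB s hs)) ?_
  exact_mod_cast Nat.multinomial_pos _ _

theorem abs_coeff_coeffInr_le_multinomial_mul (hf : f ≠ 0)
    (hB : ∀ s ∈ f.support,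
      |f.coeff s| ≤ (Nat.multinomial Finset.univ fun i => s (Sum.inl i) : ℕ) * B)
    (β : τ →₀ ℕ) (γ : σ →₀ ℕ) :
    |coeff γ (coeffInr β f)| ≤ γ.multinomial * B := by
  rw [coeff_coeffInr, ← multinomial_sumElim_inl γ β]
  by_cases hγ : γ.sumElim β ∈ f.support
  · exact hB _ hγ
  · rw [notMem_support_iff.mp hγ, abs_zero]
    exact mul_nonneg (Nat.cast_nonneg _) (nonneg_of_abs_coeff_le_multinomial_mul hf hB)

end MultinomialBound

theorem stmt15_general {σ τ R : Type*} [Fintype σ] [CommRing R] [LinearOrder R]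
    [IsStrictOrderedRing R] (f : MvPolynomial (σ ⊕ τ) R) (d : ℕ) (B : R)
    (hd : (f.support.sup fun s => ∑ i, s (Sum.inl i)) = d)
    (hB : ∀ s ∈ f.support,
      |f.coeff s| ≤ (Nat.multinomial Finset.univ fun i => s (Sum.inl i) : ℕ) * B)
    (ft : MvPolynomial (σ ⊕ τ) R)
    (hft : ft = aeval (Sum.elim
      (fun i => C ((2 * Fintype.card σ : ℕ) : R) * X (Sum.inl i) - 1) fun j => X (Sum.inr j)) f) :
    ∀ s ∈ ft.support,
      |ft.coeff s| ≤ (Nat.multinomial Finset.univ fun i => s (Sum.inl i) : ℕ) *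
        (B * (3 * Fintype.card σ : ℕ) ^ d) := by
  intro s hs
  have hf : f ≠ 0 := by
    rintro rfl
    simp [hft] at hs
  have hcard : 0 < Fintype.card σ ∨ d = 0 := by
    refine (Nat.eq_zero_or_pos (Fintype.card σ)).symm.imp_right fun h => ?_
    have := Fintype.card_eq_zero_iff.mp h
    simp [← hd]
  obtain ⟨γ, β, rfl⟩ : ∃ (γ : σ →₀ ℕ) (β : τ →₀ ℕ), s = γ.sumElim β :=
    ⟨_, _, s.comapDomain_sumElim_comapDomain.symm⟩
  have coeffInr_ft : coeffInr β ft
      = aeval (fun i => C ((2 * Fintype.card σ : ℕ) : R) * X i - 1) (coeffInr β f) := by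
    rw [hft, ← coeffInr_aeval]
    simp
  rw [← coeff_coeffInr, coeffInr_ft, multinomial_sumElim_inl]
  exact abs_coeff_aeval_mul_card_mul_X_sub_one_le two_pos hcard
    ((totalDegree_coeffInr_le β f).trans_eq hd)
    (abs_coeff_coeffInr_le_multinomial_mul hf hB β) γ

/-- if `f̃(X,Y) = f(2n·X − 1, Y)` (substituting only the `X`-variables) and
`deg_X f = d`, then `‖f̃‖_• ≤ ‖f‖_•·(3n)^d`, stated coefficientwise via the
multinomially-normalized coefficient bound defining `‖·‖_•`. -/
theorem stmt15 {n r : ℕ} (f : MvPolynomial (Fin n ⊕ Fin r) ℝ) (d : ℕ) (B : ℝ)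
    (hd : degX f = d)
    (hB : ∀ s ∈ f.support,
      |f.coeff s| ≤ (Nat.multinomial Finset.univ fun i => s (Sum.inl i) : ℕ) * B)
    (ft : MvPolynomial (Fin n ⊕ Fin r) ℝ)
    (hft : ft = aeval (fun v => match v with
      | Sum.inl i => C ((2 * n : ℕ) : ℝ) * X (Sum.inl i) - 1
      | Sum.inr j => X (Sum.inr j)) f) :
    ∀ s ∈ ft.support,
      |ft.coeff s| ≤ (Nat.multinomial Finset.univ fun i => s (Sum.inl i) : ℕ) *
        (B * (3 * n : ℕ) ^ d) := by
  simpa only [Fintype.card_fin] using stmt15_general f d B hd hB ft <| by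
    rw [hft, Fintype.card_fin]
    congr 2 with (i | j) <;> rfl
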